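/- Let N ≥ 3 be an integer, p > 1, a, b ∈ ℝ, and set γ := (2 + b − a)/(p − 1). If u ∈ C^∞(ℝ^N \ {0}) is positive and satisfies −div(|x|^a Du) = |x|^b u^p pointwise on ℝ^N \ {0}, then the function V := γu + x·Du satisfies the linearized equation −div(|x|^a DV) = p |x|^b u^{p−1} V pointwise on ℝ^N \ {0}. -/

import Mathlib

open MeasureTheory Real Filter
open scoped BigOperators ENNReal NNReal RealInnerProductSpace

noncomputable section

/-- Euclidean space `ℝ^N`. -/
abbrev Euc (N : ℕ) : Type := EuclideanSpace ℝ (Fin N)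

/-- Divergence of a vector field on `ℝ^N`. -/
def vdiv {N : ℕ} (F : Euc N → Euc N) (x : Euc N) : ℝ :=
  ∑ i : Fin N, fderiv ℝ F x (EuclideanSpace.single i (1 : ℝ)) i

/-- The differential operator `-div(|x|^a ∇u)` evaluated at the point `x`. -/
def opL {N : ℕ} (a : ℝ) (u : Euc N → ℝ) (x : Euc N) : ℝ :=
  -vdiv (fun y => ‖y‖ ^ a • gradient u y) x

/-- `u` is a positive regular solution of `-div(|x|^a Du) = |x|^b u^p` on `Ω`:
`u ∈ C²(Ω \ {0}) ∩ C¹(Ω)`, `u > 0` on `Ω`, and the equation holds pointwise on `Ω \ {0}`. -/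
def IsPositiveRegularSolution {N : ℕ} (a b p : ℝ) (Ω : Set (Euc N)) (u : Euc N → ℝ) : Prop :=
  (∀ x ∈ Ω, 0 < u x) ∧
  ContDiffOn ℝ 2 u (Ω \ {0}) ∧
  ContDiffOn ℝ 1 u Ω ∧
  ∀ x ∈ Ω \ {0}, opL a u x = ‖x‖ ^ b * u x ^ p

/-- `Du` is the (componentwise) weak gradient of `u` on `Ω`. -/
def IsWeakGradientOn {N : ℕ} (Ω : Set (Euc N)) (u : Euc N → ℝ)
    (Du : Euc N → Euc N) : Prop :=
  ∀ φ : Euc N → ℝ, ContDiff ℝ 1 φ → HasCompactSupport φ → tsupport φ ⊆ Ω →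
    ∀ i : Fin N,
      ∫ x in Ω, u x * fderiv ℝ φ x (EuclideanSpace.single i (1 : ℝ))
        = -∫ x in Ω, Du x i * φ x

/-- `u` is a positive weak solution of `-div(|x|^a Du) = |x|^b u^p` on `Ω`:
`u > 0`, `u ∈ H¹_loc(Ω) ∩ L^∞_loc(Ω)` (witnessed by a weak gradient `Du` which is
locally square integrable together with `u`), and the weak formulation of the
equation holds against all `C¹` test functions compactly supported in `Ω`. -/
def IsPositiveWeakSolution {N : ℕ} (a b p : ℝ) (Ω : Set (Euc N)) (u : Euc N → ℝ) : Prop :=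
  (∀ x ∈ Ω, 0 < u x) ∧
  ∃ Du : Euc N → Euc N,
    IsWeakGradientOn Ω u Du ∧
    (∀ K : Set (Euc N), K ⊆ Ω → IsCompact K →
      IntegrableOn (fun x => u x ^ 2 + ‖Du x‖ ^ 2) K) ∧
    (∀ K : Set (Euc N), K ⊆ Ω → IsCompact K → ∃ C : ℝ, ∀ x ∈ K, u x ≤ C) ∧
    (∀ φ : Euc N → ℝ, ContDiff ℝ 1 φ → HasCompactSupport φ → tsupport φ ⊆ Ω →
      ∫ x in Ω, ‖x‖ ^ a * ⟪Du x, gradient φ x⟫ = ∫ x in Ω, ‖x‖ ^ b * u x ^ p * φ x)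

/-- `u` (with weak gradient `Du`) belongs to the weighted space `D_{a,b,q}(ℝ^N)`,
the closure of `C_c^∞(ℝ^N)` in the norm `‖u‖² = (∫|x|^b |u|^q)^{2/q} + ∫|x|^a |Du|²`. -/
def MemWeightedSobolev {N : ℕ} (a b q : ℝ) (u : Euc N → ℝ) (Du : Euc N → Euc N) : Prop :=
  Integrable (fun x : Euc N => ‖x‖ ^ b * |u x| ^ q) ∧
  Integrable (fun x : Euc N => ‖x‖ ^ a * ‖Du x‖ ^ 2) ∧
  ∃ φ : ℕ → Euc N → ℝ,
    (∀ n, ContDiff ℝ (⊤ : ℕ∞) (φ n) ∧ HasCompactSupport (φ n)) ∧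
    Tendsto (fun n => ∫ x, ‖x‖ ^ b * |φ n x - u x| ^ q) atTop (nhds 0) ∧
    Tendsto (fun n => ∫ x, ‖x‖ ^ a * ‖gradient (φ n) x - Du x‖ ^ 2) atTop (nhds 0)

/-- `u` is a finite energy solution of `-div(|x|^a Du) = |x|^b u^p` on `ℝ^N`:
a positive weak solution belonging to `D_{a,b,p+1}(ℝ^N)`. -/
def IsFiniteEnergySolution {N : ℕ} (a b p : ℝ) (u : Euc N → ℝ) : Prop :=
  (∀ x : Euc N, 0 < u x) ∧
  ∃ Du : Euc N → Euc N,
    IsWeakGradientOn Set.univ u Du ∧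
    (∀ K : Set (Euc N), IsCompact K →
      IntegrableOn (fun x => u x ^ 2 + ‖Du x‖ ^ 2) K) ∧
    (∀ K : Set (Euc N), IsCompact K → ∃ C : ℝ, ∀ x ∈ K, u x ≤ C) ∧
    (∀ φ : Euc N → ℝ, ContDiff ℝ 1 φ → HasCompactSupport φ →
      ∫ x, ‖x‖ ^ a * ⟪Du x, gradient φ x⟫ = ∫ x, ‖x‖ ^ b * u x ^ p * φ x) ∧
    MemWeightedSobolev a b (p + 1) u Du

/-- `u ∈ H²_loc(ℝ^N)`: `u` has first and second order weak derivatives that are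
locally square integrable. -/
def MemH2Loc {N : ℕ} (u : Euc N → ℝ) : Prop :=
  ∃ Du : Euc N → Euc N, ∃ D2u : Fin N → Euc N → Euc N,
    IsWeakGradientOn Set.univ u Du ∧
    (∀ i : Fin N, IsWeakGradientOn Set.univ (fun x => Du x i) (D2u i)) ∧
    ∀ K : Set (Euc N), IsCompact K →
      IntegrableOn (fun x => u x ^ 2 + ‖Du x‖ ^ 2 + ∑ i : Fin N, ‖D2u i x‖ ^ 2) K

/-!
Write `E = x · D` for the generator of dilations. Symmetry of the second derivative gives
`D ∘ E = E ∘ D + D`, and `E (|x|^a) = a |x|^a`, so the operator `L u = -div(|x|^a Du)`, which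
is homogeneous of degree `a - 2` under dilations, satisfies `L (E u) = E (L u) + (2 - a) L u`.
If `L u = |x|^b u^p`, then applying `E` to the right-hand side gives
`L (γ u + E u) = (γ + 2 - a + b) |x|^b u^p + p |x|^b u^(p-1) E u`, and `γ` is chosen exactly so
that `γ + 2 - a + b = p γ`.
-/

open scoped Topology

section EulerDerivative

variable {E F G : Type*} [NormedAddCommGroup E] [NormedSpace ℝ E] [NormedAddCommGroup F]
  [NormedSpace ℝ F] [NormedAddCommGroup G] [NormedSpace ℝ G] {x : E}

/-- The Euler derivative `x · Df(x)`, i.e. the derivative of `t ↦ f (t x)` at `t = 1`. It is `0`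
wherever `f` is not differentiable. -/
def eulerDeriv (f : E → F) (x : E) : F :=
  fderiv ℝ f x x

theorem eulerDeriv_congr {f g : E → F} (h : f =ᶠ[𝓝 x] g) :
    eulerDeriv f x = eulerDeriv g x := by
  rw [eulerDeriv, eulerDeriv, h.fderiv_eq]

theorem eulerDeriv_neg (f : E → F) : eulerDeriv (-f) x = -eulerDeriv f x := by
  simp only [eulerDeriv, fderiv_neg, neg_apply]

theorem eulerDeriv_smul {c : E → ℝ} {f : E → F} (hc : DifferentiableAt ℝ c x)
    (hf : DifferentiableAt ℝ f x) :
    eulerDeriv (fun y => c y • f y) x = eulerDeriv c x • f x + c x • eulerDeriv f x := by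
  simp only [eulerDeriv, fderiv_fun_smul hc hf, add_apply, smul_apply,
    ContinuousLinearMap.smulRight_apply, add_comm]

theorem eulerDeriv_rpow_const {f : E → ℝ} (p : ℝ) (hf : DifferentiableAt ℝ f x) (h0 : f x ≠ 0) :
    eulerDeriv (fun y => f y ^ p) x = p * f x ^ (p - 1) * eulerDeriv f x := by
  rw [eulerDeriv, (hf.hasFDerivAt.rpow_const (Or.inl h0)).fderiv]
  rfl

theorem eulerDeriv_clm_comp (L : F →L[ℝ] G) {f : E → F} (hf : DifferentiableAt ℝ f x) :
    eulerDeriv (fun y => L (f y)) x = L (eulerDeriv f x) := by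
  have h : HasFDerivAt (fun y => L (f y)) (L ∘L fderiv ℝ f x) x :=
    L.hasFDerivAt.comp x hf.hasFDerivAt
  rw [eulerDeriv, h.fderiv]
  rfl

theorem differentiableAt_fderiv {f : E → F} (hf : ContDiffAt ℝ 2 f x) :
    DifferentiableAt ℝ (fderiv ℝ f) x :=
  (hf.fderiv_right (m := 1) (by norm_num)).differentiableAt one_ne_zero

theorem hasFDerivAt_eulerDeriv {f : E → F} (hf : ContDiffAt ℝ 2 f x) :
    HasFDerivAt (eulerDeriv f) (fderiv ℝ f x + eulerDeriv (fderiv ℝ f) x) x := by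
  have hsymm : IsSymmSndFDerivAt ℝ f x := hf.isSymmSndFDerivAt (by simp)
  refine ((differentiableAt_fderiv hf).hasFDerivAt.clm_apply (hasFDerivAt_id x)).congr_fderiv ?_
  ext v
  simp [eulerDeriv, hsymm.eq x v]

end EulerDerivative

section NormPower

variable {H : Type*} [NormedAddCommGroup H] [InnerProductSpace ℝ H] {u : H → ℝ} {x : H}

theorem contDiffAt_norm_rpow {n : WithTop ℕ∞} (a : ℝ) (hx : x ≠ 0) :
    ContDiffAt ℝ n (fun y : H => ‖y‖ ^ a) x :=
  (contDiffAt_norm ℝ hx).rpow_const_of_ne (norm_ne_zero_iff.mpr hx)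

theorem differentiableAt_norm_rpow (a : ℝ) (hx : x ≠ 0) :
    DifferentiableAt ℝ (fun y : H => ‖y‖ ^ a) x :=
  (contDiffAt_norm_rpow a hx).differentiableAt one_ne_zero

theorem eulerDeriv_norm_rpow (a : ℝ) (hx : x ≠ 0) :
    eulerDeriv (fun y : H => ‖y‖ ^ a) x = a * ‖x‖ ^ a := by
  have hnorm : DifferentiableAt ℝ (fun y : H => ‖y‖) x := differentiableAt_id.norm ℝ hx
  have hx' : ‖x‖ ≠ 0 := norm_ne_zero_iff.mpr hx
  rw [eulerDeriv_rpow_const a hnorm hx', eulerDeriv, hnorm.fderiv_norm_self, mul_assoc,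
    rpow_sub_one hx', div_mul_cancel₀ _ hx']

theorem eulerDeriv_norm_rpow_mul_rpow (b p : ℝ) (hx : x ≠ 0) (hu : DifferentiableAt ℝ u x)
    (hux : u x ≠ 0) :
    eulerDeriv (fun y => ‖y‖ ^ b * u y ^ p) x
      = ‖x‖ ^ b * (b * u x ^ p + p * u x ^ (p - 1) * eulerDeriv u x) := by
  have hprod := eulerDeriv_smul (differentiableAt_norm_rpow b hx)
    (hu.rpow_const (p := p) (Or.inl hux))
  simp only [smul_eq_mul] at hprod
  rw [hprod, eulerDeriv_norm_rpow b hx, eulerDeriv_rpow_const p hu hux]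
  ring

end NormPower

section Gradient

variable {H : Type*} [NormedAddCommGroup H] [InnerProductSpace ℝ H] [CompleteSpace H]
  {u : H → ℝ} {x : H}

theorem inner_self_gradient (u : H → ℝ) (x : H) : ⟪x, gradient u x⟫ = eulerDeriv u x := by
  rw [inner_gradient_right, conj_trivial, eulerDeriv]

theorem contDiffAt_gradient {n m : WithTop ℕ∞} (hu : ContDiffAt ℝ n u x) (hmn : m + 1 ≤ n) :
    ContDiffAt ℝ m (gradient u) x :=
  (InnerProductSpace.toDual ℝ H).symm.toContinuousLinearEquiv.contDiff.contDiffAt.comp x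
    (hu.fderiv_right hmn)

theorem gradient_const_mul_add_eulerDeriv (γ : ℝ) (hu : ContDiffAt ℝ 2 u x) :
    gradient (fun y => γ * u y + eulerDeriv u y) x
      = (γ + 1) • gradient u x + eulerDeriv (gradient u) x := by
  let riesz : StrongDual ℝ H →L[ℝ] H :=
    (InnerProductSpace.toDual ℝ H).symm.toContinuousLinearEquiv.toContinuousLinearMap
  have hV : HasFDerivAt (fun y => γ * u y + eulerDeriv u y)
      (γ • fderiv ℝ u x + (fderiv ℝ u x + eulerDeriv (fderiv ℝ u) x)) x :=
    ((hu.differentiableAt two_ne_zero).hasFDerivAt.const_mul γ).add (hasFDerivAt_eulerDeriv hu)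
  calc gradient (fun y => γ * u y + eulerDeriv u y) x
      = riesz (γ • fderiv ℝ u x + (fderiv ℝ u x + eulerDeriv (fderiv ℝ u) x)) :=
        congrArg riesz hV.fderiv
    _ = (γ + 1) • riesz (fderiv ℝ u x) + riesz (eulerDeriv (fderiv ℝ u) x) := by
        simp only [map_add, map_smul]
        module
    _ = (γ + 1) • gradient u x + eulerDeriv (gradient u) x := by
        rw [← eulerDeriv_clm_comp riesz (differentiableAt_fderiv hu)]
        rfl

theorem norm_rpow_smul_gradient_const_mul_add_eulerDeriv (a γ : ℝ) (hx : x ≠ 0)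
    (hu : ContDiffAt ℝ 2 u x) :
    ‖x‖ ^ a • gradient (fun y => γ * u y + eulerDeriv u y) x
      = (γ + 1 - a) • ‖x‖ ^ a • gradient u x
        + eulerDeriv (fun y => ‖y‖ ^ a • gradient u y) x := by
  have hgrad : DifferentiableAt ℝ (gradient u) x :=
    (contDiffAt_gradient (m := 1) hu (by norm_num)).differentiableAt one_ne_zero
  rw [gradient_const_mul_add_eulerDeriv γ hu,
    eulerDeriv_smul (differentiableAt_norm_rpow a hx) hgrad, eulerDeriv_norm_rpow a hx]
  module

end Gradient

section Divergence

variable {N : ℕ} {F G : Euc N → Euc N} {x : Euc N}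

/-- The trace of an endomorphism of `ℝ^N`, as a continuous linear functional. -/
def traceCLM (N : ℕ) : (Euc N →L[ℝ] Euc N) →L[ℝ] ℝ :=
  ∑ i : Fin N, EuclideanSpace.proj i ∘L
    ContinuousLinearMap.apply ℝ (Euc N) (EuclideanSpace.single i (1 : ℝ))

theorem vdiv_eq_traceCLM_fderiv (F : Euc N → Euc N) (x : Euc N) :
    vdiv F x = traceCLM N (fderiv ℝ F x) := by
  simp [vdiv, traceCLM]

theorem vdiv_congr (h : F =ᶠ[𝓝 x] G) : vdiv F x = vdiv G x := by
  rw [vdiv_eq_traceCLM_fderiv, vdiv_eq_traceCLM_fderiv, h.fderiv_eq]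

theorem vdiv_const_smul_add_eulerDeriv (c : ℝ) (hF : ContDiffAt ℝ 2 F x) :
    vdiv (fun y => c • F y + eulerDeriv F y) x
      = (c + 1) * vdiv F x + eulerDeriv (vdiv F) x := by
  have hsum : HasFDerivAt (fun y => c • F y + eulerDeriv F y)
      (c • fderiv ℝ F x + (fderiv ℝ F x + eulerDeriv (fderiv ℝ F) x)) x :=
    ((hF.differentiableAt two_ne_zero).hasFDerivAt.const_smul c).add (hasFDerivAt_eulerDeriv hF)
  have htrace : eulerDeriv (vdiv F) x = traceCLM N (eulerDeriv (fderiv ℝ F) x) := by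
    rw [← eulerDeriv_clm_comp _ (differentiableAt_fderiv hF), funext (vdiv_eq_traceCLM_fderiv F)]
  rw [htrace, vdiv_eq_traceCLM_fderiv, vdiv_eq_traceCLM_fderiv, hsum.fderiv]
  simp only [map_add, map_smul, smul_eq_mul]
  ring

end Divergence

section WeightedLaplacian

variable {N : ℕ} {u : Euc N → ℝ} {x : Euc N}

theorem opL_const_mul_add_eulerDeriv (a γ : ℝ) (hx : x ≠ 0) (hu : ContDiffAt ℝ 3 u x) :
    opL a (fun y => γ * u y + eulerDeriv u y) x
      = (γ + 2 - a) * opL a u x + eulerDeriv (opL a u) x := by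
  have hflux : (fun y => ‖y‖ ^ a • gradient (fun z => γ * u z + eulerDeriv u z) y) =ᶠ[𝓝 x]
      fun y => (γ + 1 - a) • ‖y‖ ^ a • gradient u y
        + eulerDeriv (fun z => ‖z‖ ^ a • gradient u z) y := by
    filter_upwards [hu.eventually (by simp), isOpen_ne.mem_nhds hx] with y hu_y hy
    exact norm_rpow_smul_gradient_const_mul_add_eulerDeriv a γ hy (hu_y.of_le (by norm_num))
  have hsmooth : ContDiffAt ℝ 2 (fun y => ‖y‖ ^ a • gradient u y) x :=
    (contDiffAt_norm_rpow a hx).smul (contDiffAt_gradient hu (by norm_num))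
  have hneg : eulerDeriv (opL a u) x = -eulerDeriv (vdiv fun y => ‖y‖ ^ a • gradient u y) x :=
    eulerDeriv_neg _
  rw [hneg, opL, vdiv_congr hflux, vdiv_const_smul_add_eulerDeriv _ hsmooth, opL]
  ring

theorem linearized_equation_general {a b p γ : ℝ} (hγ : γ * (p - 1) = 2 + b - a)
    (hx : x ≠ 0) (hreg : ContDiffAt ℝ 3 u x) (hpos : 0 < u x)
    (heq : ∀ᶠ y in 𝓝 x, opL a u y = ‖y‖ ^ b * u y ^ p) :
    opL a (fun y => γ * u y + ⟪y, gradient u y⟫) x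
      = p * ‖x‖ ^ b * u x ^ (p - 1) * (γ * u x + ⟪x, gradient u x⟫) := by
  have hdiff : DifferentiableAt ℝ u x := hreg.differentiableAt three_ne_zero
  have hpow : u x ^ p = u x ^ (p - 1) * u x := by
    rw [rpow_sub_one hpos.ne', div_mul_cancel₀ _ hpos.ne']
  simp only [inner_self_gradient]
  calc opL a (fun y => γ * u y + eulerDeriv u y) x
      = (γ + 2 - a) * opL a u x + eulerDeriv (opL a u) x :=
        opL_const_mul_add_eulerDeriv a γ hx hreg
    _ = (γ + 2 - a) * (‖x‖ ^ b * u x ^ p)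
          + ‖x‖ ^ b * (b * u x ^ p + p * u x ^ (p - 1) * eulerDeriv u x) := by
        rw [heq.self_of_nhds, eulerDeriv_congr heq,
          eulerDeriv_norm_rpow_mul_rpow b p hx hdiff hpos.ne']
    _ = p * ‖x‖ ^ b * u x ^ (p - 1) * (γ * u x + eulerDeriv u x) := by
        rw [hpow]
        linear_combination -(‖x‖ ^ b * (u x ^ (p - 1) * u x)) * hγ

end WeightedLaplacian

/-- If `u ∈ C^∞(ℝ^N \ {0})` is positive and solves
`-div(|x|^a Du) = |x|^b u^p` on `ℝ^N \ {0}`, then `V = γu + x·Du` solves the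
linearized equation `-div(|x|^a DV) = p |x|^b u^{p-1} V` on `ℝ^N \ {0}`. -/
theorem linearized_equation
    (N : ℕ) (a b p : ℝ) (hN : 3 ≤ N) (hp : 1 < p)
    (γ : ℝ) (hγ : γ = (2 + b - a) / (p - 1))
    (u : Euc N → ℝ)
    (hreg : ContDiffOn ℝ (⊤ : ℕ∞) u {(0 : Euc N)}ᶜ)
    (hpos : ∀ x : Euc N, x ≠ 0 → 0 < u x)
    (heq : ∀ x : Euc N, x ≠ 0 → opL a u x = ‖x‖ ^ b * u x ^ p) :
    ∀ x : Euc N, x ≠ 0 →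
      opL a (fun y : Euc N => γ * u y + ⟪y, gradient u y⟫) x
        = p * ‖x‖ ^ b * u x ^ (p - 1) * (γ * u x + ⟪x, gradient u x⟫) := fun x hx =>
  linearized_equation_general (by rw [hγ, div_mul_cancel₀ _ (sub_ne_zero.mpr hp.ne')]) hx
    (contDiffAt_infty.mp (hreg.contDiffAt (isOpen_ne.mem_nhds hx)) 3) (hpos x hx)
    ((isOpen_ne.eventually_mem hx).mono heq)
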